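/- The homomorphism φ^s : U(sl(m+1|n)) → D'(m|n)⊗U(gl(m|n)), i.e. the restriction of φ_R to U(sl(m+1|n)) (which is independent of R), is injective. -/

import Mathlib

set_option maxHeartbeats 1000000
set_option synthInstance.maxHeartbeats 400000

noncomputable section
open scoped TensorProduct

/-- The index set `I = {1,…,m,1̄,…,n̄}` of `gl(m|n)`; `Sum.inl` are the even
(unbarred) indices, `Sum.inr` the odd (barred) ones.  The index set
`Î = {0} ∪ I` of `gl(m+1|n)` is realized as `Ind (m+1) n`, with `0 = Sum.inl 0`. -/
abbrev Ind (m n : ℕ) := Fin m ⊕ Fin n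

/-- Parity of an index, as `0` or `1`. -/
def pI {m n : ℕ} : Ind m n → ℕ := Sum.elim (fun _ => 0) (fun _ => 1)

/-- The total order `1 < ⋯ < m < 1̄ < ⋯ < n̄` on `I` (and, with `m+1` in place of `m`,
the order `0 < 1 < ⋯ < m < 1̄ < ⋯ < n̄` on `Î`). -/
def iltI {m n : ℕ} : Ind m n → Ind m n → Prop
  | Sum.inl a, Sum.inl b => a < b
  | Sum.inl _, Sum.inr _ => True
  | Sum.inr _, Sum.inl _ => False
  | Sum.inr a, Sum.inr b => a < b

/-- The distinguished index `0` of `Î`. -/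
def z0 {m n : ℕ} : Ind (m+1) n := Sum.inl 0

/-- The inclusion `I ↪ Î`. -/
def emb {m n : ℕ} : Ind m n → Ind (m+1) n := Sum.map Fin.succ id

lemma emb_injective {m n : ℕ} : Function.Injective (emb (m := m) (n := n)) := by
  intro a b h
  cases a <;> cases b <;> simp [emb, Fin.succ_inj] at h <;> simp [h]

lemma emb_ne_z0 {m n : ℕ} (a : Ind m n) : emb a ≠ z0 := by
  cases a <;> simp [emb, z0, Fin.succ_ne_zero]

/-- Builds a linear map out of a space with basis `α` from a function on basis vectors. -/
def mkOp {α M : Type} [AddCommGroup M] [Module ℂ M] (g : α → M) : (α →₀ ℂ) →ₗ[ℂ] M :=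
  Finsupp.lsum ℂ fun x => LinearMap.toSpanSingleton ℂ M (g x)

/-- Number of odd variables occurring before position `i`. -/
def cntB {n : ℕ} (b : Fin n → Bool) (i : Fin n) : ℕ :=
  (Finset.univ.filter fun j => j < i ∧ b j = true).card

/-- Number of odd variables occurring. -/
def cntA {n : ℕ} (b : Fin n → Bool) : ℕ := (Finset.univ.filter fun j => b j = true).card


/-- The defining (super-)commutation relations of `gl`:
`e_ij e_kl − (−1)^{(|i|+|j|)(|k|+|l|)} e_kl e_ij = δ_jk e_il − (−1)^{(|i|+|j|)(|k|+|l|)} δ_li e_kj`. -/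
inductive glRel (ι : Type) (p : ι → ℕ) [DecidableEq ι] :
    FreeAlgebra ℂ (ι × ι) → FreeAlgebra ℂ (ι × ι) → Prop
  | basic (i j k l : ι) : glRel ι p
      (FreeAlgebra.ι ℂ (i, j) * FreeAlgebra.ι ℂ (k, l)
        - ((-1 : ℂ) ^ ((p i + p j) * (p k + p l))) •
            (FreeAlgebra.ι ℂ (k, l) * FreeAlgebra.ι ℂ (i, j)))
      ((if j = k then FreeAlgebra.ι ℂ (i, l) else 0)
        - ((-1 : ℂ) ^ ((p i + p j) * (p k + p l))) •
            (if l = i then FreeAlgebra.ι ℂ (k, j) else 0))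

/-- The universal enveloping superalgebra of the general linear Lie superalgebra with
index set `ι` and parity `p`, presented by generators `e_ij` and the super-commutator
relations. -/
abbrev UEA (ι : Type) (p : ι → ℕ) [DecidableEq ι] : Type := RingQuot (glRel ι p)

/-- The generator `e_ij` of `UEA ι p`. -/
def gen {ι : Type} (p : ι → ℕ) [DecidableEq ι] (i j : ι) : UEA ι p :=
  RingQuot.mkAlgHom ℂ (glRel ι p) (FreeAlgebra.ι ℂ (i, j))

/-- Monomials `t_0^{k} t^e t̄^b` of `F = ℂ[t_0^{±1},t_1,…,t_m] ⊗ Λ_n`. -/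
abbrev FMon (m n : ℕ) := ℤ × (Fin m → ℕ) × (Fin n → Bool)

/-- `F = ℂ[t_0^{±1},t_1,…,t_m] ⊗ Λ_n` as the vector space with basis the monomials. -/
abbrev FSp (m n : ℕ) : Type := FMon m n →₀ ℂ

/-- The basis monomial of `F` attached to `x`. -/
def fmono {m n : ℕ} (x : FMon m n) : FSp m n := Finsupp.single x 1

/-- Left multiplication by `t_i/t_0` for an even index `i ∈ {1,…,m}`. -/
def opDivE {m n : ℕ} (i : Fin m) : Module.End ℂ (FSp m n) :=
  mkOp fun x => fmono (x.1 - 1, Function.update x.2.1 i (x.2.1 i + 1), x.2.2)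

/-- Left multiplication by `t_ī/t_0` for an odd index `ī`. -/
def opDivO {m n : ℕ} (i : Fin n) : Module.End ℂ (FSp m n) :=
  mkOp fun x => if x.2.2 i then 0 else
    ((-1 : ℂ) ^ (cntB x.2.2 i)) • fmono (x.1 - 1, x.2.1, Function.update x.2.2 i true)

/-- The operator `t_0 ∂_0`. -/
def opPar0 {m n : ℕ} : Module.End ℂ (FSp m n) :=
  mkOp fun x => (x.1 : ℂ) • fmono x

/-- The operator `t_0 ∂_i` for an even index `i ∈ {1,…,m}`. -/
def opParE {m n : ℕ} (i : Fin m) : Module.End ℂ (FSp m n) :=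
  mkOp fun x => (x.2.1 i : ℂ) • fmono (x.1 + 1, Function.update x.2.1 i (x.2.1 i - 1), x.2.2)

/-- The operator `t_0 ∂_ī` for an odd index `ī`. -/
def opParO {m n : ℕ} (i : Fin n) : Module.End ℂ (FSp m n) :=
  mkOp fun x => if x.2.2 i then
    ((-1 : ℂ) ^ (cntB x.2.2 i)) • fmono (x.1 + 1, x.2.1, Function.update x.2.2 i false) else 0

/-- The multiplication operators `t_i/t_0`, `i ∈ I`. -/
def opDiv {m n : ℕ} : Ind m n → Module.End ℂ (FSp m n) := Sum.elim opDivE opDivO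

/-- The operators `t_0 ∂_i`, `i ∈ Î`. -/
def opPar {m n : ℕ} : Ind (m+1) n → Module.End ℂ (FSp m n) :=
  Sum.elim (Fin.cases opPar0 opParE) opParO

/-- The multiplication operators `t_i/t_0` for `i ∈ Î` (equal to `1` for `i = 0`). -/
def opDivB {m n : ℕ} : Ind (m+1) n → Module.End ℂ (FSp m n) :=
  Sum.elim (Fin.cases 1 opDivE) opDivO

/-- The generators of `D'(m|n)`. -/
def Dgens (m n : ℕ) : Set (Module.End ℂ (FSp m n)) := Set.range opDiv ∪ Set.range opPar

/-- The superalgebra `D'(m|n)` of differential operators on `F`, i.e. the subalgebra of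
operators on `F` generated by `t_i/t_0` (`i ∈ I`) and `t_0∂_i` (`i ∈ Î`). -/
def Dprime (m n : ℕ) : Subalgebra ℂ (Module.End ℂ (FSp m n)) := Algebra.adjoin ℂ (Dgens m n)

/-- `t_i/t_0` as an element of `D'(m|n)`. -/
def tdiv {m n : ℕ} (i : Ind m n) : Dprime m n :=
  ⟨opDiv i, Algebra.subset_adjoin (Or.inl ⟨i, rfl⟩)⟩

/-- `t_0∂_i` as an element of `D'(m|n)`. -/
def tpar {m n : ℕ} (i : Ind (m+1) n) : Dprime m n :=
  ⟨opPar i, Algebra.subset_adjoin (Or.inr ⟨i, rfl⟩)⟩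

/-- `t_i/t_0` for `i ∈ Î` as an element of `D'(m|n)`. -/
def tdivB {m n : ℕ} : Ind (m+1) n → Dprime m n :=
  Sum.elim (Fin.cases 1 fun i => tdiv (Sum.inl i)) fun i => tdiv (Sum.inr i)

/-- The operator `t_a∂_b = (t_a/t_0)(t_0∂_b)` of `D'(m|n)`, for `a, b ∈ Î`. -/
def tdel {m n : ℕ} (a b : Ind (m+1) n) : Dprime m n := tdivB a * tpar b

/-- The Euler operator `E = Σ_{i∈Î} t_i∂_i ∈ D'(m|n)`. -/
def En (m n : ℕ) : Dprime m n := ∑ i : Ind (m+1) n, tdel i i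

noncomputable instance instDprimeRing (m n : ℕ) : Ring (Dprime m n) :=
  @Subalgebra.toRing ℂ (Module.End ℂ (FSp m n)) inferInstance inferInstance inferInstance _

noncomputable instance instDprimeAlgebra (m n : ℕ) : Algebra ℂ (Dprime m n) :=
  @Subalgebra.algebra ℂ (Module.End ℂ (FSp m n)) inferInstance inferInstance inferInstance _

/-- The super tensor product `D'(m|n) ⊗ U(gl(m|n))`, axiomatized: an algebra `T` together
with algebra maps `d ↦ d⊗1`, `u ↦ 1⊗u`, such that the induced linear map
`D'(m|n) ⊗_ℂ U(gl(m|n)) → T` is a linear isomorphism and such that the Koszul sign rule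
`(1⊗u)(d⊗1) = (−1)^{|u||d|}(d⊗1)(1⊗u)` holds on (super-)generators. -/
structure SuperTensor (m n : ℕ) where
  T : Type
  [ringT : Ring T]
  [algT : Algebra ℂ T]
  inD : Dprime m n →ₐ[ℂ] T
  inU : UEA (Ind m n) pI →ₐ[ℂ] T
  equiv : ((Dprime m n) ⊗[ℂ] (UEA (Ind m n) pI)) ≃ₗ[ℂ] T
  equiv_tmul : ∀ (d : Dprime m n) (u : UEA (Ind m n) pI), equiv (d ⊗ₜ u) = inD d * inU u
  comm_div : ∀ (i j k : Ind m n),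
    inU (gen pI i j) * inD (tdiv k) =
      ((-1 : ℂ) ^ ((pI i + pI j) * pI k)) • (inD (tdiv k) * inU (gen pI i j))
  comm_par : ∀ (i j : Ind m n) (k : Ind (m+1) n),
    inU (gen pI i j) * inD (tpar k) =
      ((-1 : ℂ) ^ ((pI i + pI j) * pI k)) • (inD (tpar k) * inU (gen pI i j))

attribute [instance] SuperTensor.ringT SuperTensor.algT

/-- The predicate expressing that `φ : U(gl(m+1|n)) → D'(m|n) ⊗ U(gl(m|n))` is given on the
generators `e_ab` by the formulas of Theorem 3.1 (for the central element `R`). -/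
def IsPhi {m n : ℕ} (ST : SuperTensor m n) (R : ST.T)
    (φ : UEA (Ind (m+1) n) pI →ₐ[ℂ] ST.T) : Prop :=
  (∀ a b : Ind m n, φ (gen pI (emb a) (emb b)) =
      ST.inD (tdel (emb a) (emb b)) + ST.inU (gen pI a b)
        + (if a = b then ((-1 : ℂ) ^ (pI a * pI b)) • R else 0)) ∧
  (∀ a : Ind m n, φ (gen pI (emb a) z0) =
      ST.inD (tdel (emb a) z0)
        - ∑ j : Ind m n, ((-1 : ℂ) ^ (pI a * pI j)) • (ST.inD (tdiv j) * ST.inU (gen pI a j))) ∧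
  (∀ b : Ind m n, φ (gen pI z0 (emb b)) = ST.inD (tdel z0 (emb b))) ∧
  (φ (gen pI z0 z0) = ST.inD (tdel z0 z0) + R)

/-- The generating set of `U(sl(m+1|n))` inside `U(gl(m+1|n))`: the `e_ij` with `i ≠ j`
together with `e_00 − (−1)^{|a|} e_aa` for `a ∈ I`. -/
def slSet (m n : ℕ) : Set (UEA (Ind (m+1) n) pI) :=
  {x | (∃ i j : Ind (m+1) n, i ≠ j ∧ x = gen pI i j) ∨
    (∃ a : Ind m n, x = gen pI z0 z0 - ((-1 : ℂ) ^ (pI a)) • gen pI (emb a) (emb a))}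

/-- `U(sl(m+1|n))`, realized as the subalgebra of `U(gl(m+1|n))` generated by `sl(m+1|n)`. -/
def Usl (m n : ℕ) : Subalgebra ℂ (UEA (Ind (m+1) n) pI) := Algebra.adjoin ℂ (slSet m n)

lemma mem_gen_ne {m n : ℕ} {i j : Ind (m+1) n} (h : i ≠ j) : gen pI i j ∈ Usl m n :=
  Algebra.subset_adjoin (Or.inl ⟨i, j, h, rfl⟩)

lemma mem_h {m n : ℕ} (a : Ind m n) :
    gen pI z0 z0 - ((-1 : ℂ) ^ (pI a)) • gen pI (emb a) (emb a) ∈ Usl m n :=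
  Algebra.subset_adjoin (Or.inr ⟨a, rfl⟩)

/-- The predicate expressing that `ψ : U(sl(m+1|n)) → D'(m|n) ⊗ U(gl(m|n))` is given on the
generators by the formulas of Corollary 3.2 (the homomorphism `φ^s`). -/
def IsPhiS {m n : ℕ} (ST : SuperTensor m n) (ψ : Usl m n →ₐ[ℂ] ST.T) : Prop :=
  (∀ (a b : Ind m n) (h : a ≠ b),
    ψ ⟨gen pI (emb a) (emb b), mem_gen_ne fun he => h (emb_injective he)⟩ =
      ST.inD (tdel (emb a) (emb b)) + ST.inU (gen pI a b)) ∧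
  (∀ a : Ind m n, ψ ⟨gen pI (emb a) z0, mem_gen_ne (emb_ne_z0 a)⟩ =
      ST.inD (tdel (emb a) z0)
        - ∑ j : Ind m n, ((-1 : ℂ) ^ (pI a * pI j)) • (ST.inD (tdiv j) * ST.inU (gen pI a j))) ∧
  (∀ b : Ind m n, ψ ⟨gen pI z0 (emb b), mem_gen_ne (Ne.symm (emb_ne_z0 b))⟩ =
      ST.inD (tdel z0 (emb b))) ∧
  (∀ a : Ind m n, ψ ⟨gen pI z0 z0 - ((-1 : ℂ) ^ (pI a)) • gen pI (emb a) (emb a), mem_h a⟩ =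
      ST.inD (tdel (m:=m) (n:=n) z0 z0 - ((-1 : ℂ) ^ (pI a)) • tdel (emb a) (emb a))
        - ((-1 : ℂ) ^ (pI a)) • ST.inU (gen pI a a))

/-- The first Gelfand invariant `G₁ = Σ_i e_ii`. -/
def G1 (ι : Type) (p : ι → ℕ) [DecidableEq ι] [Fintype ι] : UEA ι p := ∑ i : ι, gen p i i

/-- The distinguished central element `R₁ = −(1/(m−n+1))(E⊗1 + 1⊗G₁)`. -/
def R1elt {m n : ℕ} (ST : SuperTensor m n) : ST.T :=
  -(1 / ((m : ℂ) - n + 1)) • (ST.inD (En m n) + ST.inU (G1 (Ind m n) pI))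

/-!
By the triangular decomposition, `U(sl(m+1|n))` is spanned by the products of a monomial in the
lowering elements `e_{a0}`, an element of `U(gl(m|n))`, and a monomial in the raising elements
`e_{0b}`; here `gl(m|n)` is the Levi factor spanned by the `e_{ab} - δ_{ab} (-1)^{|a|} e_{00}`.
The algebra `D'(m|n) ⊗ U(gl(m|n))` acts on `F ⊗ U(gl(m|n))[X]`, with `U(gl(m|n))` multiplying
through the injective twist `e_{ab} ↦ e_{ab} - δ_{ab} (-1)^{|a|} X`. Under `φ^s`,

* a raising element acts as `t_0 ∂_b`, so among the raising monomials of degree at least `|s|` only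
  the one of exponent `s` does not kill `∏_{a ∈ s} t_a/t_0`, which it sends to a nonzero scalar;
* an element of the Levi factor acts on `1 ⊗ U(gl(m|n))[X]` by twisted multiplication;
* a lowering element `e_{a0}` raises the degree in `X` by at most one, and on leading coefficients
  it is multiplication by `t_a/t_0`, so lowering monomials of different exponents produce different
  monomials of `F` there.

Hence every coefficient of an element of the kernel vanishes.
-/

section StableSubmodule

variable {R A B M : Type*} [CommSemiring R] [Semiring A] [Algebra R A] [Semiring B] [Algebra R B]
  [AddCommMonoid M] [Module R M] [Module B M] [IsScalarTower R B M] {s : Set A}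

lemma smul_mem_of_adjoin_eq_top (hs : Algebra.adjoin R s = ⊤) (f : A →ₐ[R] B)
    {N : Submodule R M} (hN : ∀ a ∈ s, ∀ x ∈ N, f a • x ∈ N) (a : A) {x : M} (hx : x ∈ N) :
    f a • x ∈ N := by
  induction (hs ▸ Algebra.mem_top : a ∈ Algebra.adjoin R s) using Algebra.adjoin_induction
    generalizing x with
  | mem a ha => exact hN a ha x hx
  | algebraMap r => simpa only [AlgHom.commutes, algebraMap_smul] using N.smul_mem r hx
  | add a b _ _ iha ihb => simpa only [map_add, add_smul] using N.add_mem (iha hx) (ihb hx)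
  | mul a b _ _ iha ihb => simpa only [map_mul, mul_smul] using iha (ihb hx)

lemma map_smul_of_adjoin_eq_top {C M' : Type*} [Semiring C] [Algebra R C] [AddCommMonoid M']
    [Module R M'] [Module C M'] [IsScalarTower R C M'] (hs : Algebra.adjoin R s = ⊤)
    (f : A →ₐ[R] B) (g : A →ₐ[R] C) (r : M →ₗ[R] M')
    (hr : ∀ a ∈ s, ∀ x, r (f a • x) = g a • r x) (a : A) (x : M) :
    r (f a • x) = g a • r x := by
  induction (hs ▸ Algebra.mem_top : a ∈ Algebra.adjoin R s) using Algebra.adjoin_induction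
    generalizing x with
  | mem a ha => exact hr a ha x
  | algebraMap c => simp only [AlgHom.commutes, algebraMap_smul, map_smul]
  | add a b _ _ iha ihb => simp only [map_add, add_smul, iha, ihb]
  | mul a b _ _ iha ihb => simp only [map_mul, mul_smul, iha, ihb]

end StableSubmodule

lemma neg_one_pow_mul_self {R : Type*} [Monoid R] [HasDistribNeg R] (k : ℕ) :
    (-1 : R) ^ k * (-1) ^ k = 1 := by
  rw [← pow_add, (Even.add_self k).neg_one_pow]

lemma supercommutator_sub_sub {R A : Type*} [CommRing R] [Ring A] [Algebra R A] {x y u v : A}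
    {s : R} (huy : Commute u y) (hxv : Commute x v) (huv : Commute u v)
    (hu : s • u = u) (hv : s • v = v) :
    (x - u) * (y - v) - s • ((y - v) * (x - u)) = x * y - s • (y * x) := by
  have hyu : s • (y * u) = u * y := by rw [← mul_smul_comm, hu, huy.eq]
  have hvx : s • (v * x) = x * v := by rw [← smul_mul_assoc, hv, hxv.eq]
  have hvu : s • (v * u) = u * v := by rw [← smul_mul_assoc, hv, huv.eq]
  simp only [sub_mul, mul_sub, smul_sub, hyu, hvx, hvu]
  abel

/-! ### Homomorphisms from `U(gl)` -/

namespace UEA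

variable {ι κ : Type} [DecidableEq ι] [DecidableEq κ] {p : ι → ℕ} {q : κ → ℕ}
  {A : Type} [Ring A] [Algebra ℂ A]

lemma gen_mul_gen (i j k l : ι) :
    gen p i j * gen p k l =
      ((-1 : ℂ) ^ ((p i + p j) * (p k + p l))) • (gen p k l * gen p i j) +
        ((if j = k then gen p i l else 0) -
          ((-1 : ℂ) ^ ((p i + p j) * (p k + p l))) • (if l = i then gen p k j else 0)) := by
  have h := RingQuot.mkAlgHom_rel ℂ (glRel.basic (p := p) i j k l)
  simp only [map_sub, map_mul, map_smul, apply_ite (RingQuot.mkAlgHom ℂ (glRel ι p)),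
    map_zero] at h
  exact sub_eq_iff_eq_add'.mp h

lemma adjoin_range_gen : Algebra.adjoin ℂ (Set.range fun x : ι × ι => gen p x.1 x.2) = ⊤ := by
  have h := congrArg (Subalgebra.map (RingQuot.mkAlgHom ℂ (glRel ι p)))
    (FreeAlgebra.adjoin_range_ι ℂ (ι × ι))
  rwa [AlgHom.map_adjoin, ← Set.range_comp, Algebra.map_top,
    (AlgHom.range_eq_top _).mpr (RingQuot.mkAlgHom_surjective ℂ _)] at h

lemma algHom_ext {f g : UEA ι p →ₐ[ℂ] A} (h : ∀ i j, f (gen p i j) = g (gen p i j)) : f = g :=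
  AlgHom.ext_of_adjoin_eq_top adjoin_range_gen (by rintro _ ⟨⟨i, j⟩, rfl⟩; exact h i j)

/-- The universal property of `U(gl)`: elements `f i j` with the super-commutation relations of
matrix units extend to an algebra homomorphism. -/
def lift (f : ι → ι → A)
    (hf : ∀ i j k l,
      f i j * f k l - ((-1 : ℂ) ^ ((p i + p j) * (p k + p l))) • (f k l * f i j) =
        (if j = k then f i l else 0) -
          ((-1 : ℂ) ^ ((p i + p j) * (p k + p l))) • (if l = i then f k j else 0)) :
    UEA ι p →ₐ[ℂ] A :=
  RingQuot.liftAlgHom ℂ ⟨FreeAlgebra.lift ℂ fun x : ι × ι => f x.1 x.2, by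
    rintro _ _ ⟨i, j, k, l⟩
    simpa only [map_sub, map_mul, map_smul, apply_ite (FreeAlgebra.lift ℂ _), map_zero,
      FreeAlgebra.lift_ι_apply] using hf i j k l⟩

@[simp] lemma lift_gen (f : ι → ι → A) (hf) (i j : ι) : lift (p := p) f hf (gen p i j) = f i j := by
  simp [lift, gen, RingQuot.liftAlgHom_mkAlgHom_apply]

lemma supercommutator_map_gen (f : UEA ι p →ₐ[ℂ] A) (i j k l : ι) :
    f (gen p i j) * f (gen p k l) -
        ((-1 : ℂ) ^ ((p i + p j) * (p k + p l))) • (f (gen p k l) * f (gen p i j)) =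
      (if j = k then f (gen p i l) else 0) -
        ((-1 : ℂ) ^ ((p i + p j) * (p k + p l))) • (if l = i then f (gen p k j) else 0) := by
  rw [← map_mul, gen_mul_gen]
  simp only [map_add, map_sub, map_smul, map_mul, apply_ite f, map_zero]
  abel

/-- The homomorphism `U(gl) → U(gl)` renaming indices along an injective parity-preserving map;
it realizes `gl(m|n)` inside `gl(m+1|n)`. -/
def map (e : ι → κ) (he : Function.Injective e) (hp : ∀ i, q (e i) = p i) :
    UEA ι p →ₐ[ℂ] UEA κ q :=
  lift (fun i j => gen q (e i) (e j)) fun i j k l => by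
    simpa only [hp, he.eq_iff, AlgHom.id_apply] using
      supercommutator_map_gen (AlgHom.id ℂ (UEA κ q)) (e i) (e j) (e k) (e l)

/-- The twist of `f` by the supertrace character with values in a central element `c`:
`e_ij ↦ f(e_ij) - δ_ij (-1)^{|i|} c`. -/
def strShift (f : UEA ι p →ₐ[ℂ] A) (c : A) (hc : ∀ i j, Commute c (f (gen p i j))) :
    UEA ι p →ₐ[ℂ] A :=
  lift (fun i j => f (gen p i j) - if i = j then ((-1 : ℂ) ^ p i) • c else 0) fun i j k l => by
    have central {i j : ι} {x : A} (hx : Commute c x) :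
        Commute (if i = j then ((-1 : ℂ) ^ p i) • c else 0) x := by
      split_ifs
      exacts [hx.smul_left _, Commute.zero_left x]
    rw [supercommutator_sub_sub (central (hc k l)) (central (hc i j)).symm
      (central (central (Commute.refl c)).symm), supercommutator_map_gen]
    · by_cases hjk : j = k <;> by_cases hli : l = i <;>
        [skip; simp_all [eq_comm]; simp_all [eq_comm]; simp_all]
      subst hjk hli
      have hsign : ((-1 : ℂ) ^ ((p l + p j) * (p j + p l))) * (-1) ^ p j = (-1) ^ p l := by
        rcases (p l).even_or_odd with h | h <;> rcases (p j).even_or_odd with h' | h' <;>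
          simp [pow_add, pow_mul, mul_add, h.neg_one_pow, h'.neg_one_pow]
      simp only [if_true, smul_sub, smul_smul, hsign]
      abel
    · split_ifs with h
      · rw [h, ((Even.add_self _).mul_right _).neg_one_pow, one_smul]
      · exact smul_zero _
    · split_ifs with h
      · rw [h, ((Even.add_self _).mul_left _).neg_one_pow, one_smul]
      · exact smul_zero _

@[simp] lemma map_gen (e : ι → κ) (he : Function.Injective e) (hp : ∀ i, q (e i) = p i) (i j : ι) :
    map e he hp (gen p i j) = gen q (e i) (e j) :=
  lift_gen _ _ i j

@[simp] lemma strShift_gen (f : UEA ι p →ₐ[ℂ] A) (c : A) (hc) (i j : ι) :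
    strShift f c hc (gen p i j) = f (gen p i j) - if i = j then ((-1 : ℂ) ^ p i) • c else 0 :=
  lift_gen _ _ i j

/-- The twist of `f` by an involution `g` commuting with its image:
`u ↦ g^{|u|} f(u)` on homogeneous elements. -/
def parityTwist (f : UEA ι p →ₐ[ℂ] A) (g : A) (hg : g * g = 1)
    (hfg : ∀ i j, Commute g (f (gen p i j))) : UEA ι p →ₐ[ℂ] A :=
  lift (fun i j => g ^ (p i + p j) * f (gen p i j)) fun i j k l => by
    have merge (i j k l : ι) : g ^ (p i + p j) * f (gen p i j) * (g ^ (p k + p l) * f (gen p k l)) =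
        g ^ (p i + p j + (p k + p l)) * (f (gen p i j) * f (gen p k l)) := by
      rw [((hfg i j).pow_left _).symm.mul_mul_mul_comm, ← pow_add]
    have cancel (a b : ℕ) : g ^ (a + b + b) = g ^ a := by
      rw [add_assoc, ← two_mul, pow_add, pow_mul, sq, hg, one_pow, mul_one]
    have h := congrArg (g ^ (p i + p j + (p k + p l)) * ·) (supercommutator_map_gen f i j k l)
    simp only [mul_sub, mul_smul_comm, mul_ite, mul_zero] at h
    rw [merge, merge, add_comm (p k + p l), h]
    have hjk : (if j = k then g ^ (p i + p j + (p k + p l)) * f (gen p i l) else 0) =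
        if j = k then g ^ (p i + p l) * f (gen p i l) else 0 :=
      if_ctx_congr Iff.rfl (fun hjk => by
        rw [hjk, show p i + p k + (p k + p l) = p i + p l + p k + p k by ring, cancel])
        fun _ => rfl
    have hli : (if l = i then g ^ (p i + p j + (p k + p l)) * f (gen p k j) else 0) =
        if l = i then g ^ (p k + p j) * f (gen p k j) else 0 :=
      if_ctx_congr Iff.rfl (fun hli => by
        rw [hli, show p i + p j + (p k + p i) = p k + p j + p i + p i by ring, cancel])
        fun _ => rfl
    rw [hjk, hli]

@[simp] lemma parityTwist_gen (f : UEA ι p →ₐ[ℂ] A) (g : A) (hg hfg) (i j : ι) :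
    parityTwist f g hg hfg (gen p i j) = g ^ (p i + p j) * f (gen p i j) :=
  lift_gen _ _ i j

/-- The one-parameter family of supertrace twists of `f`, with the parameter as the polynomial
variable: `e_ij ↦ f(e_ij) - δ_ij (-1)^{|i|} X`. -/
def polyShift (f : UEA ι p →ₐ[ℂ] A) : UEA ι p →ₐ[ℂ] Polynomial A :=
  strShift (Polynomial.CAlgHom.comp f) Polynomial.X fun _ _ => Polynomial.commute_X _

lemma polyShift_gen (f : UEA ι p →ₐ[ℂ] A) (i j : ι) : polyShift f (gen p i j) =
    Polynomial.C (f (gen p i j)) - if i = j then ((-1 : ℂ) ^ p i) • Polynomial.X else 0 :=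
  strShift_gen _ _ _ i j

lemma polyShift_injective {f : UEA ι p →ₐ[ℂ] A} (hf : Function.Injective f) :
    Function.Injective (polyShift f) := by
  let evalZero : Polynomial A →ₐ[ℂ] A :=
    { Polynomial.constantCoeff with commutes' := fun c => Polynomial.coeff_C_zero }
  have h : evalZero.comp (polyShift f) = f := algHom_ext fun i j => by
    change (polyShift f (gen p i j)).coeff 0 = f (gen p i j)
    rw [polyShift_gen]
    split_ifs <;> simp
  exact Function.Injective.of_comp (f := evalZero) (by rwa [← AlgHom.coe_comp, h])

end UEA

/-! ### Monomials in supercommuting variables -/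

section SuperMonomials

variable {ι : Type*} {p : ι → ℕ} {A : Type*} [Ring A] [Algebra ℂ A]

/-- A family `y` supercommutes with respect to the parities `p`:
`y_i y_j = (-1)^{|i||j|} y_j y_i`. -/
def SuperCommuting (p : ι → ℕ) (y : ι → A) : Prop :=
  ∀ i j, y i * y j = ((-1 : ℂ) ^ (p i * p j)) • (y j * y i)

/-- A multiset of indices is admissible as a super-monomial exponent when odd indices occur at
most once. -/
def OddNodup [DecidableEq ι] (p : ι → ℕ) (s : Multiset ι) : Prop :=
  ∀ i, Odd (p i) → s.count i ≤ 1

/-- The exponents of the ordered super-monomials in variables of parities `p`. -/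
abbrev SuperExponent [DecidableEq ι] (p : ι → ℕ) : Type _ := {s : Multiset ι // OddNodup p s}

/-- The product of the `y i` over a multiset of indices, taken in a fixed order
(an arbitrarily chosen one: `Multiset.toList`). -/
def orderedMonomial (y : ι → A) (s : Multiset ι) : A := (s.toList.map y).prod

lemma OddNodup.mono [DecidableEq ι] {s t : Multiset ι} (hst : s ≤ t) (ht : OddNodup p t) :
    OddNodup p s :=
  fun i hi => (Multiset.count_le_of_le i hst).trans (ht i hi)

namespace SuperCommuting

variable {y : ι → A} (hy : SuperCommuting p y)
include hy

lemma mul_self_eq_zero {i : ι} (hi : Odd (p i)) : y i * y i = 0 := by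
  have h := hy i i
  rw [(hi.mul hi).neg_one_pow, neg_smul, one_smul, eq_neg_iff_add_eq_zero, ← two_smul ℂ] at h
  exact (smul_eq_zero.mp h).resolve_left two_ne_zero

lemma exists_smul_of_perm {l l' : List ι} (h : l.Perm l') :
    ∃ c : ℂ, (l.map y).prod = c • (l'.map y).prod := by
  induction h with
  | nil => exact ⟨1, (one_smul _ _).symm⟩
  | cons i _ ih =>
    obtain ⟨c, hc⟩ := ih
    exact ⟨c, by simp only [List.map_cons, List.prod_cons, hc, mul_smul_comm]⟩
  | swap i j l =>
    exact ⟨(-1) ^ (p j * p i), by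
      simp only [List.map_cons, List.prod_cons, ← mul_assoc, hy j i, smul_mul_assoc]⟩
  | trans _ _ ih ih' =>
    obtain ⟨c, hc⟩ := ih
    obtain ⟨d, hd⟩ := ih'
    exact ⟨c * d, by rw [hc, hd, smul_smul]⟩

lemma prod_eq_zero [DecidableEq ι] {l : List ι} (hl : ¬ OddNodup p (l : Multiset ι)) :
    (l.map y).prod = 0 := by
  simp only [OddNodup, not_forall, not_le, Multiset.coe_count] at hl
  obtain ⟨i, hi, hcount⟩ := hl
  obtain ⟨l', hl'⟩ := (List.replicate_sublist_iff.mpr hcount).exists_perm_append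
  obtain ⟨c, hc⟩ := hy.exists_smul_of_perm hl'
  rw [hc]
  simp [List.replicate_succ, ← mul_assoc, hy.mul_self_eq_zero hi]

lemma exists_smul_orderedMonomial [DecidableEq ι] (l : List ι) :
    ∃ (c : ℂ) (s : SuperExponent p), (l.map y).prod = c • orderedMonomial y s := by
  by_cases hl : OddNodup p (l : Multiset ι)
  · obtain ⟨c, hc⟩ := hy.exists_smul_of_perm
      (Multiset.coe_eq_coe.mp (Multiset.coe_toList (l : Multiset ι)).symm)
    exact ⟨c, ⟨l, hl⟩, hc⟩
  · exact ⟨0, ⟨0, fun _ _ => by simp⟩, by rw [hy.prod_eq_zero hl, zero_smul]⟩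

end SuperCommuting

end SuperMonomials

/-! ### Operators on the space `F` -/

section Indices

variable {m n : ℕ}

@[simp] lemma pI_emb (a : Ind m n) : pI (emb a) = pI a := by cases a <;> rfl

lemma pI_mul_self (a : Ind m n) : pI a * pI a = pI a := by cases a <;> rfl

@[simp] lemma pI_z0 : pI (z0 : Ind (m + 1) n) = 0 := rfl

lemma eq_z0_or_exists_eq_emb (i : Ind (m + 1) n) : i = z0 ∨ ∃ a : Ind m n, i = emb a := by
  rcases i with i | i
  · cases i using Fin.cases with
    | zero => exact Or.inl rfl
    | succ i => exact Or.inr ⟨Sum.inl i, rfl⟩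
  · exact Or.inr ⟨Sum.inr i, rfl⟩

end Indices

namespace FSp

variable {m n : ℕ}

@[simp] lemma mkOp_fmono {M : Type} [AddCommGroup M] [Module ℂ M] (g : FMon m n → M)
    (x : FMon m n) : mkOp g (fmono x) = g x := by
  simp [mkOp, fmono]

lemma linearMap_ext {M : Type*} [AddCommMonoid M] [Module ℂ M] {f g : FSp m n →ₗ[ℂ] M}
    (h : ∀ x, f (fmono x) = g (fmono x)) : f = g :=
  Finsupp.lhom_ext' fun x => LinearMap.ext_ring (h x)

/-- The parity operator of `F`: it acts by `(-1)^k` on the polynomials of degree `k` in the odd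
variables. -/
def parityOp : Module.End ℂ (FSp m n) := mkOp fun x => ((-1 : ℂ) ^ cntA x.2.2) • fmono x

lemma cntA_update_true {b : Fin n → Bool} {i : Fin n} (h : b i = false) :
    cntA (Function.update b i true) = cntA b + 1 := by
  have hinsert : (Finset.univ.filter fun j => Function.update b i true j = true) =
      insert i (Finset.univ.filter fun j => b j = true) := by
    ext j
    by_cases hj : j = i <;> simp [hj]
  rw [cntA, hinsert, Finset.card_insert_of_notMem (by simp [h]), cntA]

lemma cntA_update_false {b : Fin n → Bool} {i : Fin n} (h : b i = true) :
    cntA (Function.update b i false) + 1 = cntA b := by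
  rw [← cntA_update_true (Function.update_self i false b), Function.update_idem, ← h,
    Function.update_eq_self]

lemma parityOp_mul_self : (parityOp : Module.End ℂ (FSp m n)) * parityOp = 1 :=
  linearMap_ext fun x => by simp [parityOp, smul_smul, neg_one_pow_mul_self]

lemma parityOp_mul_opDiv (a : Ind m n) :
    parityOp * opDiv a = ((-1 : ℂ) ^ pI a) • (opDiv a * parityOp) := by
  refine linearMap_ext fun x => ?_
  rcases a with i | i
  · simp [parityOp, opDiv, opDivE, pI]
  · by_cases h : x.2.2 i = true
    · simp [parityOp, opDiv, opDivO, h]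
    · rw [Bool.not_eq_true] at h
      simp [parityOp, opDiv, opDivO, pI, h, cntA_update_true h, pow_succ, smul_smul, mul_comm]

lemma parityOp_mul_opPar (a : Ind (m + 1) n) :
    parityOp * opPar a = ((-1 : ℂ) ^ pI a) • (opPar a * parityOp) := by
  refine linearMap_ext fun x => ?_
  rcases a with i | i
  · cases i using Fin.cases <;> simp [parityOp, opPar, opPar0, opParE, pI, smul_smul, mul_comm]
  · by_cases h : x.2.2 i = true
    · simp [parityOp, opPar, opParO, pI, h, ← cntA_update_false h, pow_succ, smul_smul, mul_comm]
    · simp [parityOp, opPar, opParO, h]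

lemma parityOp_pow_mul {k c : ℕ} {D : Module.End ℂ (FSp m n)}
    (h : parityOp * D = ((-1 : ℂ) ^ c) • (D * parityOp)) :
    parityOp ^ k * D = ((-1 : ℂ) ^ (k * c)) • (D * parityOp ^ k) := by
  induction k with
  | zero => simp
  | succ k ih =>
    rw [pow_succ, mul_assoc, h, mul_smul_comm, ← mul_assoc, ih, smul_mul_assoc, smul_smul,
      mul_assoc, ← pow_add, add_one_mul, add_comm]

end FSp

namespace FMon

variable {m n : ℕ}

/-- The monomial `∏_{a ∈ s} t_a/t_0`, where an odd variable is counted at most once. -/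
def ofMultiset (s : Multiset (Ind m n)) : FMon m n :=
  (-(s.card : ℤ), fun i => s.count (Sum.inl i), fun j => decide (Sum.inr j ∈ s))

lemma ofMultiset_injOn {s t : Multiset (Ind m n)} (hs : OddNodup pI s) (ht : OddNodup pI t)
    (h : ofMultiset s = ofMultiset t) : s = t := by
  simp only [ofMultiset, Prod.mk.injEq] at h
  ext (i | j)
  · exact congrFun h.2.1 i
  · have hmem : Sum.inr j ∈ s ↔ Sum.inr j ∈ t := decide_eq_decide.mp (congrFun h.2.2 j)
    have hs' := hs (Sum.inr j) odd_one
    have ht' := ht (Sum.inr j) odd_one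
    rw [← Multiset.count_pos, ← Multiset.count_pos] at hmem
    lia

end FMon

namespace FSp

variable {m n : ℕ}

open FMon (ofMultiset)

lemma opDiv_fmono_ofMultiset {a : Ind m n} {s : Multiset (Ind m n)} (h : OddNodup pI (a ::ₘ s)) :
    ∃ c : ℂ, c ≠ 0 ∧ opDiv a (fmono (ofMultiset s)) = c • fmono (ofMultiset (a ::ₘ s)) := by
  have hcard : -(s.card : ℤ) - 1 = -((a ::ₘ s).card : ℤ) := by
    rw [Multiset.card_cons]; push_cast; ring
  rcases a with i | j
  · refine ⟨1, one_ne_zero, ?_⟩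
    simp only [opDiv, opDivE, Sum.elim_inl, mkOp_fmono, one_smul]
    refine congrArg fmono (Prod.ext hcard (Prod.ext ?_ ?_))
    · ext k
      by_cases hk : k = i <;> simp [ofMultiset, hk]
    · ext k; simp [ofMultiset]
  · have hj : Sum.inr j ∉ s := by
      simpa [Multiset.count_eq_zero] using h (Sum.inr j) odd_one
    refine ⟨(-1 : ℂ) ^ cntB (ofMultiset s).2.2 j, by simp, ?_⟩
    simp only [opDiv, opDivO, Sum.elim_inr, mkOp_fmono]
    rw [if_neg (by simp [ofMultiset, hj])]
    refine congrArg (_ • fmono ·) (Prod.ext hcard (Prod.ext ?_ ?_))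
    · ext k; simp [ofMultiset]
    · ext k
      by_cases hk : k = j <;> simp [ofMultiset, hk]

lemma opPar_fmono_ofMultiset (a : Ind m n) {s : Multiset (Ind m n)} (hs : OddNodup pI s) :
    ∃ c : ℂ, (c ≠ 0 ↔ a ∈ s) ∧
      opPar (emb a) (fmono (ofMultiset s)) = c • fmono (ofMultiset (s.erase a)) := by
  by_cases ha : a ∈ s
  swap
  · refine ⟨0, by simp [ha], ?_⟩
    rcases a with i | j <;> simp [opPar, opParE, opParO, emb, ofMultiset, ha]
  have hcard : -(s.card : ℤ) + 1 = -((s.erase a).card : ℤ) := by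
    rw [← Multiset.card_erase_add_one ha]; push_cast; ring
  rcases a with i | j
  · refine ⟨s.count (Sum.inl i), by simp, ?_⟩
    simp only [opPar, opParE, emb, Sum.map_inl, Sum.elim_inl, Fin.cases_succ, mkOp_fmono]
    refine congrArg (_ • fmono ·) (Prod.ext hcard (Prod.ext ?_ ?_))
    · ext k
      by_cases hk : k = i <;> simp [ofMultiset, hk, Multiset.count_erase_of_ne]
    · ext k; simp [ofMultiset, Multiset.mem_erase_of_ne]
  · refine ⟨(-1 : ℂ) ^ cntB (ofMultiset s).2.2 j, by simp [ha], ?_⟩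
    simp only [opPar, opParO, emb, Sum.map_inr, id, Sum.elim_inr, mkOp_fmono]
    rw [if_pos (by simpa [ofMultiset] using ha)]
    refine congrArg (_ • fmono ·) (Prod.ext hcard (Prod.ext ?_ ?_))
    · ext k; simp [ofMultiset, Multiset.count_erase_of_ne]
    · ext k
      by_cases hk : k = j
      · have hj : Sum.inr j ∉ s.erase (Sum.inr j) := by
          rw [← Multiset.count_eq_zero, Multiset.count_erase_self]
          exact Nat.sub_eq_zero_of_le (hs (Sum.inr j) odd_one)
        simp [ofMultiset, hk, hj]
      · simp [ofMultiset, hk, Multiset.mem_erase_of_ne]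

lemma opPar_z0_fmono_zero : opPar z0 (fmono (ofMultiset (0 : Multiset (Ind m n)))) = 0 := by
  simp [opPar, opPar0, z0, ofMultiset]

lemma parityOp_fmono_zero :
    parityOp (fmono (ofMultiset (0 : Multiset (Ind m n)))) = fmono (ofMultiset 0) := by
  simp [parityOp, ofMultiset, cntA]

lemma prod_opDiv_fmono_zero {l : List (Ind m n)} (hl : OddNodup pI (l : Multiset (Ind m n))) :
    ∃ c : ℂ, c ≠ 0 ∧ (l.map opDiv).prod (fmono (ofMultiset 0)) = c • fmono (ofMultiset ↑l) := by
  induction l with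
  | nil => exact ⟨1, one_ne_zero, (one_smul _ _).symm⟩
  | cons a l ih =>
    rw [← Multiset.cons_coe] at hl ⊢
    obtain ⟨c, hc, hcl⟩ := ih (hl.mono (Multiset.le_cons_self _ a))
    obtain ⟨d, hd, hda⟩ := opDiv_fmono_ofMultiset hl
    refine ⟨c * d, mul_ne_zero hc hd, ?_⟩
    rw [List.map_cons, List.prod_cons, Module.End.mul_apply, hcl, map_smul, hda, smul_smul]

lemma prod_opPar_fmono_ofMultiset {s : Multiset (Ind m n)} (hs : OddNodup pI s)
    (l : List (Ind m n)) :
    ∃ c : ℂ, (c ≠ 0 ↔ (l : Multiset (Ind m n)) ≤ s) ∧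
      (l.map fun b => opPar (emb b)).prod (fmono (ofMultiset s)) =
        c • fmono (ofMultiset (s - (l : Multiset (Ind m n)))) := by
  induction l with
  | nil => exact ⟨1, by simp, by rw [Multiset.coe_nil, tsub_zero]; exact (one_smul _ _).symm⟩
  | cons a l ih =>
    obtain ⟨c, hc, hcl⟩ := ih
    obtain ⟨d, hd, hda⟩ := opPar_fmono_ofMultiset a (hs.mono (Multiset.sub_le_self s l))
    refine ⟨c * d, ?_, ?_⟩
    · have hle (h : (l : Multiset (Ind m n)) ≤ s) :
          a ∈ s - (l : Multiset (Ind m n)) ↔ a ::ₘ (l : Multiset (Ind m n)) ≤ s := by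
        rw [← Multiset.singleton_le, le_tsub_iff_right h, Multiset.singleton_add]
      rw [mul_ne_zero_iff, hc, hd, ← Multiset.cons_coe, and_congr_right hle,
        and_iff_right_of_imp (Multiset.le_cons_self _ a).trans]
    · rw [List.map_cons, List.prod_cons, Module.End.mul_apply, hcl, map_smul, hda, smul_smul,
        ← Multiset.cons_coe, ← Multiset.singleton_add, add_comm, tsub_add_eq_tsub_tsub,
        Multiset.sub_singleton]

end FSp

/-! ### Triangular decomposition of `U(sl(m+1|n))` -/

namespace Usl

variable {m n : ℕ}

/-- The elements `e_{a0}` of `sl(m+1|n)`. -/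
def lowering (a : Ind m n) : Usl m n := ⟨gen pI (emb a) z0, mem_gen_ne (emb_ne_z0 a)⟩

/-- The elements `e_{0b}` of `sl(m+1|n)`. -/
def raising (b : Ind m n) : Usl m n := ⟨gen pI z0 (emb b), mem_gen_ne (emb_ne_z0 b).symm⟩

/-- The homomorphism `e_ab ↦ e_ab - δ_ab (-1)^{|a|} e_00`, embedding `gl(m|n)` in `sl(m+1|n)` as
the Levi factor, with values in `U(gl(m+1|n))`. -/
def leviUEA : UEA (Ind m n) pI →ₐ[ℂ] UEA (Ind (m + 1) n) pI :=
  UEA.strShift (UEA.map emb emb_injective pI_emb) (gen pI z0 z0) fun a b => by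
    rw [UEA.map_gen, commute_iff_eq, UEA.gen_mul_gen]
    simp [emb_ne_z0, (emb_ne_z0 _).symm]

lemma leviUEA_gen_self (a : Ind m n) : leviUEA (gen pI a a) =
    -((-1 : ℂ) ^ pI a) • (gen pI z0 z0 - ((-1 : ℂ) ^ pI a) • gen pI (emb a) (emb a)) := by
  rw [leviUEA, UEA.strShift_gen, UEA.map_gen, if_pos rfl, smul_sub, smul_smul, neg_mul,
    neg_one_pow_mul_self]
  module

lemma leviUEA_gen_of_ne {a b : Ind m n} (h : a ≠ b) :
    leviUEA (gen pI a b) = gen pI (emb a) (emb b) := by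
  rw [leviUEA, UEA.strShift_gen, UEA.map_gen, if_neg h, sub_zero]

lemma leviUEA_mem (u : UEA (Ind m n) pI) : leviUEA u ∈ Usl m n := by
  have hle : (leviUEA (m := m) (n := n)).range ≤ Usl m n := by
    rw [← Algebra.map_top, ← UEA.adjoin_range_gen, AlgHom.map_adjoin, Usl, Algebra.adjoin_le_iff]
    rintro _ ⟨_, ⟨⟨a, b⟩, rfl⟩, rfl⟩
    by_cases h : a = b
    · subst h
      rw [leviUEA_gen_self]
      exact (Usl m n).smul_mem (mem_h a) _
    · rw [leviUEA_gen_of_ne h]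
      exact mem_gen_ne (emb_injective.ne h)
  exact hle ⟨u, rfl⟩

/-- The embedding of `U(gl(m|n))` in `U(sl(m+1|n))` as the enveloping algebra of the Levi
factor. -/
def levi : UEA (Ind m n) pI →ₐ[ℂ] Usl m n := leviUEA.codRestrict (Usl m n) leviUEA_mem

lemma levi_gen_self (a : Ind m n) : levi (gen pI a a) =
    -((-1 : ℂ) ^ pI a) •
      (⟨gen pI z0 z0 - ((-1 : ℂ) ^ pI a) • gen pI (emb a) (emb a), mem_h a⟩ : Usl m n) :=
  Subtype.ext (leviUEA_gen_self a)

lemma levi_gen_of_ne {a b : Ind m n} (h : a ≠ b) :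
    levi (gen pI a b) = ⟨gen pI (emb a) (emb b), mem_gen_ne (emb_injective.ne h)⟩ :=
  Subtype.ext (leviUEA_gen_of_ne h)

lemma coe_levi_gen (a b : Ind m n) : (levi (gen pI a b) : UEA (Ind (m + 1) n) pI) =
    gen pI (emb a) (emb b) - if a = b then ((-1 : ℂ) ^ pI a) • gen pI z0 z0 else 0 :=
  (UEA.strShift_gen _ _ _ a b).trans (by rw [UEA.map_gen])

lemma superCommuting_lowering : SuperCommuting pI (lowering (m := m) (n := n)) := fun a b =>
  Subtype.ext <| by
    simpa [lowering, emb_ne_z0, (emb_ne_z0 _).symm] using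
      UEA.gen_mul_gen (p := pI) (emb a) z0 (emb b) z0

lemma superCommuting_raising : SuperCommuting pI (raising (m := m) (n := n)) := fun a b =>
  Subtype.ext <| by
    simpa [raising, emb_ne_z0, (emb_ne_z0 _).symm] using
      UEA.gen_mul_gen (p := pI) z0 (emb a) z0 (emb b)

lemma levi_gen_mul_lowering (a b c : Ind m n) : levi (gen pI a b) * lowering c =
    ((-1 : ℂ) ^ ((pI a + pI b) * pI c)) • (lowering c * levi (gen pI a b)) +
      ((if b = c then (1 : ℂ) else 0) • lowering a +
        (if a = b then ((-1 : ℂ) ^ pI a) else 0) • lowering c) := by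
  have hz : gen pI z0 z0 * gen pI (emb c) z0 =
      gen pI (emb c) z0 * gen pI z0 z0 - gen pI (emb c) z0 := by
    rw [UEA.gen_mul_gen]
    simp [(emb_ne_z0 _).symm, sub_eq_add_neg]
  refine Subtype.ext ?_
  push_cast
  rw [coe_levi_gen, lowering, lowering, sub_mul, mul_sub, UEA.gen_mul_gen]
  by_cases h : a = b
  · subst h
    simp [emb_injective.eq_iff, (emb_ne_z0 _).symm, hz, smul_sub,
      ((Even.add_self (pI a)).mul_right _).neg_one_pow]
    split_ifs <;> abel
  · simp [h, emb_injective.eq_iff, (emb_ne_z0 _).symm]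

lemma raising_mul_levi_gen (c a b : Ind m n) : raising c * levi (gen pI a b) =
    ((-1 : ℂ) ^ (pI c * (pI a + pI b))) • (levi (gen pI a b) * raising c) +
      ((if c = a then (1 : ℂ) else 0) • raising b +
        (if a = b then ((-1 : ℂ) ^ pI a) else 0) • raising c) := by
  have hz : gen pI z0 (emb c) * gen pI z0 z0 =
      gen pI z0 z0 * gen pI z0 (emb c) - gen pI z0 (emb c) := by
    rw [UEA.gen_mul_gen]
    simp [emb_ne_z0, sub_eq_add_neg]
  refine Subtype.ext ?_
  push_cast
  rw [coe_levi_gen, raising, raising, mul_sub, sub_mul, UEA.gen_mul_gen]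
  by_cases h : a = b
  · subst h
    simp [emb_injective.eq_iff, emb_ne_z0, hz, smul_sub,
      ((Even.add_self (pI a)).mul_left _).neg_one_pow]
    split_ifs <;> abel
  · simp [h, emb_injective.eq_iff, emb_ne_z0]

lemma raising_mul_lowering (b c : Ind m n) : raising b * lowering c =
    ((-1 : ℂ) ^ (pI b * pI c)) • (lowering c * raising b) +
      (-(-1 : ℂ) ^ (pI b * pI c)) • levi (gen pI c b) := by
  refine Subtype.ext ?_
  push_cast
  rw [coe_levi_gen, raising, lowering, UEA.gen_mul_gen]
  by_cases h : b = c
  · subst h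
    simp [smul_sub, smul_smul, neg_one_pow_mul_self, pI_mul_self]
    abel
  · simp [h, emb_injective.eq_iff, Ne.symm h, sub_eq_add_neg]

/-- The span of the products (lowering word) · (element of `U(gl(m|n))`) · (raising word). -/
def triangularSpan (m n : ℕ) : Submodule ℂ (Usl m n) :=
  Submodule.span ℂ {x | ∃ (w : List (Ind m n)) (u : UEA (Ind m n) pI) (w' : List (Ind m n)),
    x = (w.map lowering).prod * (levi u * (w'.map raising).prod)}

lemma prod_mem_triangularSpan (w : List (Ind m n)) (u : UEA (Ind m n) pI) (w' : List (Ind m n)) :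
    (w.map lowering).prod * (levi u * (w'.map raising).prod) ∈ triangularSpan m n :=
  Submodule.subset_span ⟨w, u, w', rfl⟩

lemma levi_mul_prod_mem_triangularSpan (u : UEA (Ind m n) pI) (w' : List (Ind m n)) :
    levi u * (w'.map raising).prod ∈ triangularSpan m n := by
  simpa using prod_mem_triangularSpan [] u w'

lemma triangularSpan_le {N : Submodule ℂ (Usl m n)}
    (hlevi : ∀ u (w' : List (Ind m n)), levi u * (w'.map raising).prod ∈ N)
    (hlow : ∀ a, ∀ z ∈ N, lowering a * z ∈ N) : triangularSpan m n ≤ N := by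
  refine Submodule.span_le.mpr ?_
  rintro _ ⟨w, u, w', rfl⟩
  induction w with
  | nil => simpa using hlevi u w'
  | cons a w ih =>
    rw [List.map_cons, List.prod_cons, mul_assoc]
    exact hlow a _ ih

lemma lowering_mul_mem (a : Ind m n) {z : Usl m n} (hz : z ∈ triangularSpan m n) :
    lowering a * z ∈ triangularSpan m n := by
  induction hz using Submodule.span_induction with
  | mem z hz =>
    obtain ⟨w, u, w', rfl⟩ := hz
    simpa [mul_assoc] using prod_mem_triangularSpan (a :: w) u w'
  | zero => simp
  | add x y _ _ hx hy => rw [mul_add]; exact add_mem hx hy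
  | smul c x _ hx => rw [mul_smul_comm]; exact Submodule.smul_mem _ c hx

/-- The elements of a submodule `S` that left multiplication by each `f i` keeps in `S`. -/
def stablePart {ι : Type*} (S : Submodule ℂ (Usl m n)) (f : ι → Usl m n) : Submodule ℂ (Usl m n) :=
  S ⊓ ⨅ i, S.comap (LinearMap.mulLeft ℂ (f i))

lemma mem_stablePart {ι : Type*} {S : Submodule ℂ (Usl m n)} {f : ι → Usl m n} {z : Usl m n} :
    z ∈ stablePart S f ↔ z ∈ S ∧ ∀ i, f i * z ∈ S := by
  simp [stablePart]

lemma levi_gen_mul_mem (a b : Ind m n) {z : Usl m n} (hz : z ∈ triangularSpan m n) :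
    levi (gen pI a b) * z ∈ triangularSpan m n := by
  have hle : triangularSpan m n ≤
      stablePart (triangularSpan m n) fun i : Ind m n × Ind m n => levi (gen pI i.1 i.2) := by
    refine triangularSpan_le (fun u w' => ?_) fun c z hz => ?_
    · refine mem_stablePart.mpr ⟨levi_mul_prod_mem_triangularSpan u w', fun i => ?_⟩
      rw [← mul_assoc, ← map_mul]
      exact levi_mul_prod_mem_triangularSpan _ w'
    · obtain ⟨hz, hlevi⟩ := mem_stablePart.mp hz
      refine mem_stablePart.mpr ⟨lowering_mul_mem c hz, fun i => ?_⟩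
      rw [← mul_assoc, levi_gen_mul_lowering]
      simp only [add_mul, smul_mul_assoc, mul_assoc]
      exact add_mem (Submodule.smul_mem _ _ (lowering_mul_mem c (hlevi i)))
        (add_mem (Submodule.smul_mem _ _ (lowering_mul_mem i.1 hz))
          (Submodule.smul_mem _ _ (lowering_mul_mem c hz)))
  exact (mem_stablePart.mp (hle hz)).2 (a, b)

lemma raising_mul_levi_mul_mem (u : UEA (Ind m n) pI) (b : Ind m n) (w' : List (Ind m n)) :
    raising b * (levi u * (w'.map raising).prod) ∈ triangularSpan m n := by
  have hstable : levi u • (w'.map raising).prod ∈ stablePart (triangularSpan m n) raising := by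
    refine smul_mem_of_adjoin_eq_top UEA.adjoin_range_gen levi ?_ u ?_
    · rintro _ ⟨⟨i, j⟩, rfl⟩ z hz
      obtain ⟨hz, hraise⟩ := mem_stablePart.mp hz
      refine mem_stablePart.mpr ⟨levi_gen_mul_mem i j hz, fun c => ?_⟩
      rw [smul_eq_mul, ← mul_assoc, raising_mul_levi_gen]
      simp only [add_mul, smul_mul_assoc, mul_assoc]
      exact add_mem (Submodule.smul_mem _ _ (levi_gen_mul_mem i j (hraise c)))
        (add_mem (Submodule.smul_mem _ _ (hraise j)) (Submodule.smul_mem _ _ (hraise c)))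
    · refine mem_stablePart.mpr ⟨?_, fun c => ?_⟩
      · simpa only [map_one, one_mul] using levi_mul_prod_mem_triangularSpan 1 w'
      · simpa only [map_one, one_mul, List.map_cons, List.prod_cons] using
          levi_mul_prod_mem_triangularSpan 1 (c :: w')
  exact (mem_stablePart.mp hstable).2 b

lemma raising_mul_mem (b : Ind m n) {z : Usl m n} (hz : z ∈ triangularSpan m n) :
    raising b * z ∈ triangularSpan m n := by
  have hle : triangularSpan m n ≤ stablePart (triangularSpan m n) raising := by
    refine triangularSpan_le (fun u w' => ?_) fun c z hz => ?_
    · exact mem_stablePart.mpr ⟨levi_mul_prod_mem_triangularSpan u w',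
        fun b => raising_mul_levi_mul_mem u b w'⟩
    · obtain ⟨hz, hraise⟩ := mem_stablePart.mp hz
      refine mem_stablePart.mpr ⟨lowering_mul_mem c hz, fun b => ?_⟩
      rw [← mul_assoc, raising_mul_lowering, add_mul, smul_mul_assoc, smul_mul_assoc, mul_assoc]
      exact add_mem (Submodule.smul_mem _ _ (lowering_mul_mem c (hraise b)))
        (Submodule.smul_mem _ _ (levi_gen_mul_mem c b hz))
  exact (mem_stablePart.mp (hle hz)).2 b

theorem triangularSpan_eq_top : triangularSpan m n = ⊤ := by
  refine eq_top_iff.mpr fun x _ => ?_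
  have hone : (1 : Usl m n) ∈ triangularSpan m n := by
    simpa using prod_mem_triangularSpan (m := m) (n := n) [] 1 []
  suffices h : ∀ y ∈ ((↑) : Usl m n → UEA (Ind (m + 1) n) pI) ⁻¹' slSet m n,
      ∀ z ∈ triangularSpan m n, y * z ∈ triangularSpan m n by
    have hx : x * 1 ∈ triangularSpan m n :=
      smul_mem_of_adjoin_eq_top Algebra.adjoin_adjoin_coe_preimage (AlgHom.id ℂ (Usl m n)) h x hone
    rwa [mul_one] at hx
  rintro ⟨_, hy⟩ (⟨i, j, hij, rfl⟩ | ⟨a, rfl⟩) z hz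
  · rcases eq_z0_or_exists_eq_emb i with rfl | ⟨a, rfl⟩ <;>
      rcases eq_z0_or_exists_eq_emb j with rfl | ⟨b, rfl⟩
    · exact absurd rfl hij
    · exact raising_mul_mem b hz
    · exact lowering_mul_mem a hz
    · have h := levi_gen_mul_mem a b hz
      rwa [levi_gen_of_ne fun h => hij (congrArg emb h)] at h
  · have h := Submodule.smul_mem _ (-((-1 : ℂ) ^ pI a)) (levi_gen_mul_mem a a hz)
    rwa [levi_gen_self, smul_mul_assoc, smul_smul, neg_mul_neg, neg_one_pow_mul_self,
      one_smul] at h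

/-- The linear map `(u_s)_s ↦ ∑_s (lowering monomial)^s · u_s`. -/
def lowerSum : (SuperExponent (pI (m := m) (n := n)) →₀ UEA (Ind m n) pI) →ₗ[ℂ] Usl m n :=
  Finsupp.lsum ℂ fun s =>
    LinearMap.mulLeft ℂ (orderedMonomial lowering s.1) ∘ₗ levi.toLinearMap

/-- The linear map `(u_{s,s'}) ↦ ∑ (lowering monomial)^s · u_{s,s'} · (raising monomial)^{s'}`; its
arguments are indexed by `s'` first. -/
def triangularSum : (SuperExponent (pI (m := m) (n := n)) →₀
      SuperExponent (pI (m := m) (n := n)) →₀ UEA (Ind m n) pI) →ₗ[ℂ] Usl m n :=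
  Finsupp.lsum ℂ fun s' =>
    LinearMap.mulRight ℂ (orderedMonomial raising s'.1) ∘ₗ lowerSum

lemma lowerSum_apply (c : SuperExponent (pI (m := m) (n := n)) →₀ UEA (Ind m n) pI) :
    lowerSum c = ∑ s ∈ c.support, orderedMonomial lowering s.1 * levi (c s) :=
  rfl

lemma triangularSum_apply (c : SuperExponent (pI (m := m) (n := n)) →₀
      SuperExponent (pI (m := m) (n := n)) →₀ UEA (Ind m n) pI) :
    triangularSum c = ∑ s' ∈ c.support, lowerSum (c s') * orderedMonomial raising s'.1 :=
  rfl

theorem triangularSum_surjective : Function.Surjective (triangularSum (m := m) (n := n)) := by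
  rw [← LinearMap.range_eq_top, eq_top_iff, ← triangularSpan_eq_top, triangularSpan,
    Submodule.span_le]
  rintro _ ⟨w, u, w', rfl⟩
  obtain ⟨c, s, hw⟩ := superCommuting_lowering.exists_smul_orderedMonomial w
  obtain ⟨d, s', hw'⟩ := superCommuting_raising.exists_smul_orderedMonomial w'
  refine ⟨(c * d) • Finsupp.single s' (Finsupp.single s u), ?_⟩
  simp [hw, hw', triangularSum, lowerSum, mul_assoc, smul_smul, mul_comm]

end Usl

/-! ### Representations on `F ⊗ B` -/

namespace FSp

variable {m n : ℕ} {B : Type} [Ring B] [Algebra ℂ B]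

/-- The additive group of `F ⊗ B`, given through the scalar `-1` because the addition of
`TensorProduct.addCommGroup` is not reducibly equal to that of `TensorProduct.addCommMonoid` here,
so that no ring structure would be found on `Module.End ℂ (F ⊗ B)`. -/
instance : AddCommGroup (FSp m n ⊗[ℂ] B) := Module.addCommMonoidToAddCommGroup ℂ

/-- The action of the operators on `F` on the first factor of `F ⊗ B`. -/
def opExt (B : Type) [Ring B] [Algebra ℂ B] :
    Module.End ℂ (FSp m n) →ₐ[ℂ] Module.End ℂ (FSp m n ⊗[ℂ] B) :=
  Module.End.rTensorAlgHom ℂ (FSp m n) B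

/-- The action of `B` by left multiplication on the second factor of `F ⊗ B`, without signs. -/
def coeffMul : B →ₐ[ℂ] Module.End ℂ (FSp m n ⊗[ℂ] B) :=
  (Module.End.lTensorAlgHom ℂ B (FSp m n)).comp (Algebra.lmul ℂ B)

@[simp] lemma opExt_tmul (D : Module.End ℂ (FSp m n)) (f : FSp m n) (b : B) :
    opExt B D (f ⊗ₜ b) = D f ⊗ₜ b := rfl

@[simp] lemma coeffMul_tmul (b : B) (f : FSp m n) (b' : B) :
    coeffMul b (f ⊗ₜ b') = f ⊗ₜ (b * b') := rfl

lemma commute_opExt_coeffMul (D : Module.End ℂ (FSp m n)) (b : B) :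
    Commute (opExt B D) (coeffMul b) :=
  TensorProduct.ext' fun _ _ => rfl

/-- The action of `U(gl(m|n))` on `F ⊗ B` through `θ : U(gl(m|n)) → B`, with the Koszul signs. -/
def superMul (θ : UEA (Ind m n) pI →ₐ[ℂ] B) :
    UEA (Ind m n) pI →ₐ[ℂ] Module.End ℂ (FSp m n ⊗[ℂ] B) :=
  UEA.parityTwist (A := Module.End ℂ (FSp m n ⊗[ℂ] B)) (coeffMul.comp θ) (opExt B parityOp)
    (by rw [← map_mul, parityOp_mul_self, map_one]) fun _ _ => commute_opExt_coeffMul _ _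

lemma superMul_gen (θ : UEA (Ind m n) pI →ₐ[ℂ] B) (i j : Ind m n) : superMul θ (gen pI i j) =
    opExt B (parityOp ^ (pI i + pI j)) * coeffMul (θ (gen pI i j)) := by
  rw [map_pow]
  exact UEA.parityTwist_gen _ _ _ _ i j

lemma superMul_gen_mul_opExt (θ : UEA (Ind m n) pI →ₐ[ℂ] B) (i j : Ind m n) {c : ℕ}
    {D : Module.End ℂ (FSp m n)} (h : parityOp * D = ((-1 : ℂ) ^ c) • (D * parityOp)) :
    superMul θ (gen pI i j) * opExt B D =
      ((-1 : ℂ) ^ ((pI i + pI j) * c)) • (opExt B D * superMul θ (gen pI i j)) := by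
  rw [superMul_gen, mul_assoc, ← (commute_opExt_coeffMul D _).eq, ← mul_assoc, ← mul_assoc,
    ← map_mul, ← map_mul, parityOp_pow_mul h, map_smul, smul_mul_assoc]

end FSp

namespace SuperTensor

open FSp

variable {m n : ℕ} (ST : SuperTensor m n) {B : Type} [Ring B] [Algebra ℂ B]
  (θ : UEA (Ind m n) pI →ₐ[ℂ] B)

variable {ST} in
lemma linearMap_ext {M : Type*} [AddCommMonoid M] [Module ℂ M] {f g : ST.T →ₗ[ℂ] M}
    (h : ∀ d u, f (ST.inD d * ST.inU u) = g (ST.inD d * ST.inU u)) : f = g := by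
  refine (LinearMap.cancel_right ST.equiv.surjective).mp (TensorProduct.ext' fun d u => ?_)
  simpa only [LinearMap.comp_apply, LinearEquiv.coe_coe, ST.equiv_tmul] using h d u

/-- The linear map underlying the representation `SuperTensor.rep`: `d ⊗ u` acts by `d` after
`superMul θ u`. -/
def repLinear : ST.T →ₗ[ℂ] Module.End ℂ (FSp m n ⊗[ℂ] B) :=
  LinearMap.mul' ℂ _ ∘ₗ
    TensorProduct.map ((opExt B).comp (Dprime m n).val).toLinearMap (superMul θ).toLinearMap ∘ₗ
      ST.equiv.symm.toLinearMap

lemma repLinear_inD_mul_inU (d : Dprime m n) (u : UEA (Ind m n) pI) :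
    ST.repLinear θ (ST.inD d * ST.inU u) = opExt B d * superMul θ u := by
  simp [repLinear, ← ST.equiv_tmul]

lemma repLinear_inD_mul (d : Dprime m n) (t : ST.T) :
    ST.repLinear θ (ST.inD d * t) = opExt B d * ST.repLinear θ t := by
  have h : ST.repLinear θ ∘ₗ LinearMap.mulLeft ℂ (ST.inD d) =
      LinearMap.mulLeft ℂ (opExt B d.1) ∘ₗ ST.repLinear θ := linearMap_ext fun d' u => by
    simp only [LinearMap.comp_apply, LinearMap.mulLeft_apply]
    rw [← mul_assoc, ← map_mul, repLinear_inD_mul_inU, repLinear_inD_mul_inU, ← mul_assoc,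
      ← map_mul]
    rfl
  exact LinearMap.congr_fun h t

lemma repLinear_inU_gen_mul (i j : Ind m n) (t : ST.T) :
    ST.repLinear θ (ST.inU (gen pI i j) * t) = superMul θ (gen pI i j) * ST.repLinear θ t := by
  let N := LinearMap.eqLocus (ST.repLinear θ ∘ₗ LinearMap.mulLeft ℂ (ST.inU (gen pI i j)))
    (LinearMap.mulLeft ℂ (superMul θ (gen pI i j)) ∘ₗ ST.repLinear θ)
  have inD_mul_mem {d : Dprime m n} {k : ℕ}
      (hT : ST.inU (gen pI i j) * ST.inD d =
        ((-1 : ℂ) ^ ((pI i + pI j) * k)) • (ST.inD d * ST.inU (gen pI i j)))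
      (hd : parityOp * d.1 = ((-1 : ℂ) ^ k) • (d.1 * parityOp)) (x : ST.T) (hx : x ∈ N) :
      ST.inD d * x ∈ N := by
    change ST.repLinear θ (ST.inU _ * x) = superMul θ _ * ST.repLinear θ x at hx
    change ST.repLinear θ (ST.inU _ * (ST.inD d * x)) =
      superMul θ _ * ST.repLinear θ (ST.inD d * x)
    rw [← mul_assoc, hT, smul_mul_assoc, mul_assoc, map_smul, repLinear_inD_mul, hx,
      repLinear_inD_mul, ← mul_assoc, ← mul_assoc, superMul_gen_mul_opExt θ i j hd, smul_mul_assoc]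
  have inU_mem (u : UEA (Ind m n) pI) : ST.inU u ∈ N := by
    have h (v : UEA (Ind m n) pI) : ST.repLinear θ (ST.inU v) = superMul θ v := by
      simpa using repLinear_inD_mul_inU ST θ 1 v
    change ST.repLinear θ (ST.inU _ * ST.inU u) = superMul θ _ * ST.repLinear θ (ST.inU u)
    rw [← map_mul, h, h, map_mul]
  have hN : ST.repLinear θ ∘ₗ LinearMap.mulLeft ℂ (ST.inU (gen pI i j)) =
      LinearMap.mulLeft ℂ (superMul θ (gen pI i j)) ∘ₗ ST.repLinear θ :=
    linearMap_ext fun d u => ?_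
  · exact LinearMap.congr_fun hN t
  refine smul_mem_of_adjoin_eq_top (N := N) Algebra.adjoin_adjoin_coe_preimage ST.inD ?_ d
    (inU_mem u)
  rintro ⟨_, _⟩ (⟨k, rfl⟩ | ⟨k, rfl⟩)
  exacts [inD_mul_mem (ST.comm_div i j k) (parityOp_mul_opDiv k),
    inD_mul_mem (ST.comm_par i j k) (parityOp_mul_opPar k)]

lemma repLinear_inU_mul (u : UEA (Ind m n) pI) (t : ST.T) :
    ST.repLinear θ (ST.inU u * t) = superMul θ u * ST.repLinear θ t :=
  map_smul_of_adjoin_eq_top UEA.adjoin_range_gen ST.inU (superMul θ) (ST.repLinear θ)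
    (by rintro _ ⟨⟨i, j⟩, rfl⟩ x; exact ST.repLinear_inU_gen_mul θ i j x) u t

/-- The representation of `D'(m|n) ⊗ U(gl(m|n))` on `F ⊗ B` attached to a homomorphism
`θ : U(gl(m|n)) → B`. -/
def rep : ST.T →ₐ[ℂ] Module.End ℂ (FSp m n ⊗[ℂ] B) :=
  AlgHom.ofLinearMap (ST.repLinear θ) (by simpa using ST.repLinear_inD_mul_inU θ 1 1) fun x y => by
    have h : ST.repLinear θ ∘ₗ LinearMap.mulRight ℂ y =
        LinearMap.mulRight ℂ (ST.repLinear θ y) ∘ₗ ST.repLinear θ := linearMap_ext fun d u => by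
      simp only [LinearMap.comp_apply, LinearMap.mulRight_apply]
      rw [mul_assoc, repLinear_inD_mul, repLinear_inU_mul, repLinear_inD_mul_inU, mul_assoc]
    exact LinearMap.congr_fun h x

lemma rep_inD (d : Dprime m n) : ST.rep θ (ST.inD d) = opExt B d := by
  have h : ST.repLinear θ (ST.inD d) = opExt B d := by
    simpa using ST.repLinear_inD_mul_inU θ d 1
  exact h

lemma rep_inU (u : UEA (Ind m n) pI) : ST.rep θ (ST.inU u) = superMul θ u := by
  have h : ST.repLinear θ (ST.inU u) = superMul θ u := by
    simpa using ST.repLinear_inD_mul_inU θ 1 u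
  exact h

end SuperTensor

section Tdel

variable {m n : ℕ}

lemma coe_tdel_emb (a : Ind m n) (b : Ind (m + 1) n) :
    (tdel (emb a) b : Dprime m n).1 = opDiv a * opPar b := by
  have h : (tdivB (emb a) : Dprime m n) = tdiv a := by rcases a with i | i <;> rfl
  rw [tdel, h]
  rfl

lemma tdel_z0 (b : Ind (m + 1) n) : (tdel z0 b : Dprime m n) = tpar b :=
  one_mul (tpar b)

end Tdel

namespace IsPhiS

open FSp Usl
open FMon (ofMultiset)

variable {m n : ℕ} {ST : SuperTensor m n} {ψ : Usl m n →ₐ[ℂ] ST.T} (hψ : IsPhiS ST ψ)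
  {B : Type} [Ring B] [Algebra ℂ B] (θ : UEA (Ind m n) pI →ₐ[ℂ] B)
include hψ

lemma rep_raising (b : Ind m n) : ST.rep θ (ψ (raising b)) = opExt B (opPar (emb b)) := by
  rw [raising, hψ.2.2.1, ST.rep_inD, tdel_z0]
  rfl

lemma rep_lowering (a : Ind m n) : ST.rep θ (ψ (lowering a)) =
    opExt B (opDiv a) * opExt B (opPar z0) -
      ∑ j, ((-1 : ℂ) ^ (pI a * pI j)) • (opExt B (opDiv j) * superMul θ (gen pI a j)) := by
  rw [lowering, hψ.2.1, map_sub, ST.rep_inD, coe_tdel_emb, map_mul, map_sum]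
  simp only [map_smul, map_mul, ST.rep_inD, ST.rep_inU]
  rfl

lemma rep_levi_gen (a b : Ind m n) : ST.rep θ (ψ (levi (gen pI a b))) =
    opExt B (opDiv a) * opExt B (opPar (emb b)) + superMul θ (gen pI a b) -
      (if a = b then (-1 : ℂ) ^ pI a else 0) • opExt B (opPar z0) := by
  have hz : ((tpar z0 : Dprime m n) : Module.End ℂ (FSp m n)) = opPar z0 := rfl
  by_cases h : a = b
  · subst h
    rw [levi_gen_self, map_smul, hψ.2.2.2, map_smul, map_sub, map_smul, ST.rep_inU, map_sub,
      map_smul, map_sub, map_smul, ST.rep_inD, ST.rep_inD, coe_tdel_emb, map_mul, tdel_z0, hz,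
      if_pos rfl]
    simp only [smul_sub, smul_smul, neg_mul, neg_one_pow_mul_self]
    module
  · rw [levi_gen_of_ne h, hψ.1 a b h, map_add, ST.rep_inD, ST.rep_inU, coe_tdel_emb, map_mul,
      if_neg h, zero_smul, sub_zero]

lemma rep_levi_vacuum (u : UEA (Ind m n) pI) (b : B) :
    ST.rep θ (ψ (levi u)) (fmono (ofMultiset 0) ⊗ₜ b) = fmono (ofMultiset 0) ⊗ₜ (θ u * b) := by
  refine (map_smul_of_adjoin_eq_top UEA.adjoin_range_gen θ ((ST.rep θ).comp (ψ.comp levi))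
    (TensorProduct.mk ℂ (FSp m n) B (fmono (ofMultiset 0))) ?_ u b).symm
  rintro _ ⟨⟨i, j⟩, rfl⟩ b
  have hsign (k : ℕ) : (parityOp ^ k) (fmono (ofMultiset (0 : Multiset (Ind m n)))) =
      fmono (ofMultiset 0) := by
    induction k with
    | zero => rfl
    | succ k ih => rw [pow_succ, Module.End.mul_apply, parityOp_fmono_zero, ih]
  have hpar : opPar (emb j) (fmono (ofMultiset 0)) = 0 := by
    obtain ⟨c, hc, h⟩ := opPar_fmono_ofMultiset j (s := 0) fun _ _ => by simp
    rw [h, show c = 0 by simpa using hc, zero_smul]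
  change _ = ST.rep θ (ψ (levi (gen pI i j))) (fmono (ofMultiset 0) ⊗ₜ b)
  rw [hψ.rep_levi_gen, superMul_gen]
  simp only [LinearMap.sub_apply, LinearMap.add_apply, LinearMap.smul_apply, Module.End.mul_apply,
    opExt_tmul, coeffMul_tmul, hpar, hsign, opPar_z0_fmono_zero, TensorProduct.zero_tmul, map_zero,
    smul_zero, zero_add, sub_zero]
  rfl

lemma exists_rep_orderedMonomial_raising (s : SuperExponent (pI (m := m) (n := n)))
    (s' : Multiset (Ind m n)) (b : B) :
    ∃ c : ℂ, (c ≠ 0 ↔ s' ≤ s.1) ∧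
      ST.rep θ (ψ (orderedMonomial raising s')) (fmono (ofMultiset s.1) ⊗ₜ b) =
        c • (fmono (ofMultiset (s.1 - s')) ⊗ₜ b) := by
  obtain ⟨c, hc, h⟩ := prod_opPar_fmono_ofMultiset s.2 s'.toList
  rw [Multiset.coe_toList] at hc h
  refine ⟨c, hc, ?_⟩
  have hrep : ST.rep θ (ψ (orderedMonomial raising s')) =
      opExt B (s'.toList.map fun b => opPar (emb b)).prod := by
    simp only [orderedMonomial, map_list_prod, List.map_map, Function.comp_def,
      hψ.rep_raising θ]
  rw [hrep, opExt_tmul, h, TensorProduct.smul_tmul']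

end IsPhiS

/-! ### Leading coefficients in `X` -/

namespace FSp

variable {m n : ℕ} {A : Type} [Ring A] [Algebra ℂ A]

/-- The coefficient of the monomial `x` of `F`, as a map `F ⊗ A → A`. -/
def monoCoeff (x : FMon m n) : FSp m n ⊗[ℂ] A →ₗ[ℂ] A :=
  (TensorProduct.lid ℂ A).toLinearMap ∘ₗ
    LinearMap.rTensor A (Finsupp.lapply x : FSp m n →ₗ[ℂ] ℂ)

lemma monoCoeff_tmul (x y : FMon m n) (a : A) :
    monoCoeff x (fmono y ⊗ₜ a) = if y = x then a else 0 := by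
  simp [monoCoeff, fmono, Finsupp.single_apply, ite_smul]

/-- The coefficient of `X^k`, as a map `F ⊗ A[X] → F ⊗ A`. -/
def polyCoeff (k : ℕ) : FSp m n ⊗[ℂ] Polynomial A →ₗ[ℂ] FSp m n ⊗[ℂ] A :=
  LinearMap.lTensor (FSp m n) ((Polynomial.lcoeff A k).restrictScalars ℂ)

lemma polyCoeff_tmul (k : ℕ) (f : FSp m n) (q : Polynomial A) :
    polyCoeff k (f ⊗ₜ q) = f ⊗ₜ q.coeff k := rfl

lemma polyCoeff_opExt (k : ℕ) (D : Module.End ℂ (FSp m n)) (z : FSp m n ⊗[ℂ] Polynomial A) :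
    polyCoeff k (opExt (Polynomial A) D z) = opExt A D (polyCoeff k z) := by
  have h : polyCoeff k ∘ₗ opExt (Polynomial A) D = opExt A D ∘ₗ polyCoeff k :=
    TensorProduct.ext' fun _ _ => rfl
  exact LinearMap.congr_fun h z

lemma polyCoeff_succ_superMul_gen (η : UEA (Ind m n) pI →ₐ[ℂ] A) (i j : Ind m n) (k : ℕ)
    (z : FSp m n ⊗[ℂ] Polynomial A) :
    polyCoeff (k + 1) (superMul (UEA.polyShift η) (gen pI i j) z) =
      superMul η (gen pI i j) (polyCoeff (k + 1) z) -
        (if i = j then (-1 : ℂ) ^ pI i else 0) • polyCoeff k z := by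
  have hsign : (parityOp : Module.End ℂ (FSp m n)) ^ (pI i + pI i) = 1 := by
    rw [← two_mul, pow_mul, sq, parityOp_mul_self, one_pow]
  have h : polyCoeff (k + 1) ∘ₗ superMul (UEA.polyShift η) (gen pI i j) +
      (if i = j then (-1 : ℂ) ^ pI i else 0) • polyCoeff k =
      superMul η (gen pI i j) ∘ₗ polyCoeff (k + 1) := TensorProduct.ext' fun f q => by
    rw [superMul_gen, superMul_gen, UEA.polyShift_gen]
    simp only [LinearMap.comp_apply, LinearMap.add_apply, LinearMap.smul_apply,
      Module.End.mul_apply, coeffMul_tmul, opExt_tmul, polyCoeff_tmul]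
    split_ifs with hij
    · subst hij
      rw [hsign, Module.End.one_apply, ← TensorProduct.tmul_smul, ← TensorProduct.tmul_add,
        sub_mul, Polynomial.coeff_sub, Polynomial.coeff_C_mul, smul_mul_assoc,
        Polynomial.coeff_smul, Polynomial.coeff_X_mul, sub_add_cancel]
    · rw [sub_zero, Polynomial.coeff_C_mul, zero_smul, add_zero]
  exact eq_sub_of_add_eq (LinearMap.congr_fun h z)

/-- `z ∈ F ⊗ A[X]` has degree at most `d` in `X`, with `X^d`-coefficient `w` (possibly zero). -/
def HasTopCoeff (d : ℕ) (z : FSp m n ⊗[ℂ] Polynomial A) (w : FSp m n ⊗[ℂ] A) : Prop :=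
  polyCoeff d z = w ∧ ∀ k > d, polyCoeff k z = 0

lemma hasTopCoeff_tmul (f : FSp m n) (q : Polynomial A) :
    HasTopCoeff q.natDegree (f ⊗ₜ q) (f ⊗ₜ q.leadingCoeff) :=
  ⟨rfl, fun k hk => by
    rw [polyCoeff_tmul, Polynomial.coeff_eq_zero_of_natDegree_lt hk, TensorProduct.tmul_zero]⟩

end FSp

namespace IsPhiS

open FSp Usl
open FMon (ofMultiset)

variable {m n : ℕ} {ST : SuperTensor m n} {ψ : Usl m n →ₐ[ℂ] ST.T} (hψ : IsPhiS ST ψ)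
  {A : Type} [Ring A] [Algebra ℂ A] (η : UEA (Ind m n) pI →ₐ[ℂ] A)
include hψ

lemma polyCoeff_succ_rep_lowering (a : Ind m n) (k : ℕ) (z : FSp m n ⊗[ℂ] Polynomial A) :
    polyCoeff (k + 1) (ST.rep (UEA.polyShift η) (ψ (lowering a)) z) =
      ST.rep η (ψ (lowering a)) (polyCoeff (k + 1) z) + opExt A (opDiv a) (polyCoeff k z) := by
  have hsum : ∑ j, ((-1 : ℂ) ^ (pI a * pI j)) • opExt A (opDiv j)
      ((if a = j then (-1 : ℂ) ^ pI a else 0) • polyCoeff k z) =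
      opExt A (opDiv a) (polyCoeff k z) := by
    rw [Finset.sum_eq_single_of_mem a (Finset.mem_univ a)
      fun j _ hj => by rw [if_neg hj.symm, zero_smul, map_zero, smul_zero],
      if_pos rfl, map_smul, smul_smul, pI_mul_self, neg_one_pow_mul_self, one_smul]
  rw [hψ.rep_lowering, hψ.rep_lowering]
  simp only [LinearMap.sub_apply, LinearMap.sum_apply, LinearMap.smul_apply, Module.End.mul_apply,
    map_sub, map_sum, LinearMap.map_smul, polyCoeff_opExt, polyCoeff_succ_superMul_gen, smul_sub,
    Finset.sum_sub_distrib] at hsum ⊢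
  rw [hsum, sub_sub_eq_add_sub, add_sub_right_comm]

lemma hasTopCoeff_rep_lowering (a : Ind m n) {d : ℕ} {z : FSp m n ⊗[ℂ] Polynomial A}
    {w : FSp m n ⊗[ℂ] A} (h : HasTopCoeff d z w) :
    HasTopCoeff (d + 1) (ST.rep (UEA.polyShift η) (ψ (lowering a)) z) (opExt A (opDiv a) w) := by
  refine ⟨?_, fun k hk => ?_⟩
  · rw [hψ.polyCoeff_succ_rep_lowering, h.2 _ d.lt_succ_self, map_zero, zero_add, h.1]
  · obtain ⟨k, rfl⟩ := Nat.exists_eq_add_one_of_ne_zero (Nat.ne_zero_of_lt hk)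
    rw [hψ.polyCoeff_succ_rep_lowering, h.2 _ (Nat.lt_of_succ_lt hk),
      h.2 _ (Nat.lt_of_succ_lt_succ hk), map_zero, map_zero, add_zero]

lemma hasTopCoeff_rep_prod_lowering (l : List (Ind m n)) {d : ℕ}
    {z : FSp m n ⊗[ℂ] Polynomial A} {w : FSp m n ⊗[ℂ] A} (h : HasTopCoeff d z w) :
    HasTopCoeff (l.length + d) (ST.rep (UEA.polyShift η) (ψ (l.map lowering).prod) z)
      (opExt A (l.map opDiv).prod w) := by
  induction l with
  | nil => simpa using h
  | cons a l ih =>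
    simp only [List.map_cons, List.prod_cons, map_mul, Module.End.mul_apply, List.length_cons,
      Nat.add_right_comm _ 1]
    exact hψ.hasTopCoeff_rep_lowering η a ih

lemma exists_hasTopCoeff_rep_orderedMonomial_lowering_mul_levi
    (s : SuperExponent (pI (m := m) (n := n))) (u : UEA (Ind m n) pI) :
    ∃ c : ℂ, c ≠ 0 ∧ HasTopCoeff (s.1.card + (UEA.polyShift η u).natDegree)
      (ST.rep (UEA.polyShift η) (ψ (orderedMonomial lowering s.1 * levi u))
        (fmono (ofMultiset 0) ⊗ₜ 1))
      (c • (fmono (ofMultiset s.1) ⊗ₜ (UEA.polyShift η u).leadingCoeff)) := by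
  obtain ⟨c, hc, hcs⟩ := prod_opDiv_fmono_zero (l := s.1.toList)
    (by rw [Multiset.coe_toList]; exact s.2)
  refine ⟨c, hc, ?_⟩
  have h := hψ.hasTopCoeff_rep_prod_lowering η s.1.toList
    (hasTopCoeff_tmul (fmono (ofMultiset 0)) (UEA.polyShift η u))
  rwa [Multiset.length_toList, opExt_tmul, hcs, Multiset.coe_toList, ← TensorProduct.smul_tmul',
    ← mul_one (UEA.polyShift η u), ← hψ.rep_levi_vacuum, mul_one, ← Module.End.mul_apply,
    ← map_mul, ← map_mul] at h

variable {η} in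
lemma eq_zero_of_rep_lowerSum_vacuum (hη : Function.Injective η)
    {c : SuperExponent (pI (m := m) (n := n)) →₀ UEA (Ind m n) pI}
    (h : ST.rep (UEA.polyShift η) (ψ (lowerSum c)) (fmono (ofMultiset 0) ⊗ₜ 1) = 0) : c = 0 := by
  by_contra hne
  obtain ⟨s₀, hs₀, hmax⟩ := Finset.exists_max_image c.support
    (fun s => s.1.card + (UEA.polyShift η (c s)).natDegree) (Finsupp.support_nonempty_iff.mpr hne)
  choose d hd htop using fun s =>
    hψ.exists_hasTopCoeff_rep_orderedMonomial_lowering_mul_levi η s (c s)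
  let N := s₀.1.card + (UEA.polyShift η (c s₀)).natDegree
  have hcoeff (s) (hs : s ∈ c.support) (hss₀ : s ≠ s₀) :
      monoCoeff (ofMultiset s₀.1) (polyCoeff N (ST.rep (UEA.polyShift η)
        (ψ (orderedMonomial lowering s.1 * levi (c s))) (fmono (ofMultiset 0) ⊗ₜ 1))) = 0 := by
    rcases (hmax s hs).lt_or_eq with hlt | heq
    · rw [(htop s).2 N hlt, map_zero]
    · rw [show N = _ from heq.symm, (htop s).1, map_smul, monoCoeff_tmul, if_neg, smul_zero]
      exact fun hm => hss₀ (Subtype.ext (FMon.ofMultiset_injOn s.2 s₀.2 hm))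
  have hlead : d s₀ • (UEA.polyShift η (c s₀)).leadingCoeff = 0 := by
    have h' := congrArg (fun z => monoCoeff (ofMultiset s₀.1) (polyCoeff N z)) h
    simp only [lowerSum_apply, map_sum, LinearMap.sum_apply, map_zero] at h'
    rwa [Finset.sum_eq_single_of_mem s₀ hs₀ hcoeff, (htop s₀).1, map_smul, monoCoeff_tmul,
      if_pos rfl] at h'
  rw [smul_eq_zero_iff_right (hd s₀), Polynomial.leadingCoeff_eq_zero] at hlead
  exact Finsupp.mem_support_iff.mp hs₀ ((map_eq_zero_iff _ (UEA.polyShift_injective hη)).mp hlead)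

theorem eq_zero_of_map_triangularSum_eq_zero
    {c : SuperExponent (pI (m := m) (n := n)) →₀
      SuperExponent (pI (m := m) (n := n)) →₀ UEA (Ind m n) pI}
    (h : ψ (triangularSum c) = 0) : c = 0 := by
  by_contra hne
  obtain ⟨s₀, hs₀, hmin⟩ := Finset.exists_min_image c.support (fun s => s.1.card)
    (Finsupp.support_nonempty_iff.mpr hne)
  let θ := UEA.polyShift (AlgHom.id ℂ (UEA (Ind m n) pI))
  choose d hd hrep using fun s' : SuperExponent (pI (m := m) (n := n)) =>
    hψ.exists_rep_orderedMonomial_raising θ s₀ s'.1 1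
  have hvanish (s') (hs' : s' ∈ c.support) (hss₀ : s' ≠ s₀) :
      ST.rep θ (ψ (lowerSum (c s') * orderedMonomial raising s'.1))
        (fmono (ofMultiset s₀.1) ⊗ₜ 1) = 0 := by
    have hle : ¬ s'.1 ≤ s₀.1 := fun hle =>
      hss₀ (Subtype.ext (Multiset.eq_of_le_of_card_le hle (hmin s' hs')))
    rw [map_mul, map_mul, Module.End.mul_apply, hrep, not_not.mp (mt (hd s').mp hle), zero_smul,
      map_zero]
  have hvacuum : d s₀ • ST.rep θ (ψ (lowerSum (c s₀))) (fmono (ofMultiset 0) ⊗ₜ 1) = 0 := by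
    have h' := congrArg (fun t => ST.rep θ t (fmono (ofMultiset s₀.1) ⊗ₜ 1)) h
    simp only [triangularSum_apply, map_sum, LinearMap.sum_apply, map_zero,
      LinearMap.zero_apply] at h'
    rwa [Finset.sum_eq_single_of_mem s₀ hs₀ hvanish, map_mul, map_mul, Module.End.mul_apply, hrep,
      map_smul, tsub_self] at h'
  exact Finsupp.mem_support_iff.mp hs₀ <| hψ.eq_zero_of_rep_lowerSum_vacuum Function.injective_id <|
    (smul_eq_zero_iff_right ((hd s₀).mpr le_rfl)).mp hvacuum

end IsPhiS

/-- The homomorphism `φ^s : U(sl(m+1|n)) → D'(m|n)⊗U(gl(m|n))` is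
injective. -/
theorem stmt17 (m n : ℕ) (ST : SuperTensor m n)
    (ψ : Usl m n →ₐ[ℂ] ST.T) (hψ : IsPhiS ST ψ) :
    Function.Injective ψ := by
  rw [injective_iff_map_eq_zero]
  intro x hx
  obtain ⟨c, rfl⟩ := Usl.triangularSum_surjective x
  rw [hψ.eq_zero_of_map_triangularSum_eq_zero hx, map_zero]
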